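/- The matrix-completion objective f attains a global minimum: there exist U₀ ∈ ℝ^{m×r} and V₀ ∈ ℝ^{r×n} such that f(U₀,V₀) ≤ f(U,V) for all U ∈ ℝ^{m×r} and V ∈ ℝ^{r×n}. -/

import Mathlib

open Finset Matrix

/-- Squared Frobenius norm: `frobSq X = ‖X‖_F²`. -/
noncomputable def frobSq {a b : ℕ} (X : Matrix (Fin a) (Fin b) ℝ) : ℝ :=
  ∑ i, ∑ j, (X i j) ^ 2

/-- The matrix-completion objective
`f(U,V) = (1/2)(‖U‖_F² + ‖V‖_F²) + (μ/2) ∑_{(i,j)∈Ω} ((UV − M)_{ij})² + (ν/2) ‖L(UV) − b‖²`. -/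
noncomputable def objF {m n r p : ℕ} (Ω : Finset (Fin m × Fin n)) (M : Matrix (Fin m) (Fin n) ℝ)
    (L : Matrix (Fin m) (Fin n) ℝ →ₗ[ℝ] EuclideanSpace ℝ (Fin p))
    (b : EuclideanSpace ℝ (Fin p)) (μ ν : ℝ)
    (U : Matrix (Fin m) (Fin r) ℝ) (V : Matrix (Fin r) (Fin n) ℝ) : ℝ :=
  (1 / 2) * (frobSq U + frobSq V)
    + (μ / 2) * ∑ ij ∈ Ω, ((U * V - M) ij.1 ij.2) ^ 2
    + (ν / 2) * ‖L (U * V) - b‖ ^ 2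

lemma sq_le_frobSq {a b : ℕ} (X : Matrix (Fin a) (Fin b) ℝ) (i : Fin a) (j : Fin b) :
    (X i j) ^ 2 ≤ frobSq X := by
  unfold frobSq
  refine le_trans ?_ (Finset.single_le_sum (f := fun i => ∑ j, (X i j) ^ 2)
    (fun i _ => Finset.sum_nonneg fun j _ => sq_nonneg _) (Finset.mem_univ i))
  exact Finset.single_le_sum (f := fun j => (X i j) ^ 2)
    (fun j _ => sq_nonneg _) (Finset.mem_univ j)

lemma frobSq_nonneg {a b : ℕ} (X : Matrix (Fin a) (Fin b) ℝ) : 0 ≤ frobSq X :=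
  Finset.sum_nonneg fun _ _ => Finset.sum_nonneg fun _ _ => sq_nonneg _

lemma isCompact_box (a b : ℕ) (R : ℝ) :
    IsCompact {X : Matrix (Fin a) (Fin b) ℝ | ∀ i j, X i j ∈ Set.Icc (-R) R} := by
  have h : IsCompact (Set.pi Set.univ fun _ : Fin a =>
      Set.pi Set.univ fun _ : Fin b => Set.Icc (-R) R) :=
    isCompact_univ_pi fun _ => isCompact_univ_pi fun _ => isCompact_Icc
  have heq : {X : Matrix (Fin a) (Fin b) ℝ | ∀ i j, X i j ∈ Set.Icc (-R) R} =
      (Set.pi Set.univ fun _ : Fin a => Set.pi Set.univ fun _ : Fin b => Set.Icc (-R) R) := by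
    apply Set.ext
    intro X
    exact ⟨fun h i _ j _ => h i j, fun h i j => h i trivial j trivial⟩
  rw [heq]
  exact h

lemma continuous_objF {m n r p : ℕ} (Ω : Finset (Fin m × Fin n)) (M : Matrix (Fin m) (Fin n) ℝ)
    (L : Matrix (Fin m) (Fin n) ℝ →ₗ[ℝ] EuclideanSpace ℝ (Fin p))
    (b : EuclideanSpace ℝ (Fin p)) (μ ν : ℝ) :
    Continuous fun q : Matrix (Fin m) (Fin r) ℝ × Matrix (Fin r) (Fin n) ℝ =>
      objF Ω M L b μ ν q.1 q.2 := by
  have hL : Continuous L := L.continuous_of_finiteDimensional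
  have hmul : Continuous fun q : Matrix (Fin m) (Fin r) ℝ × Matrix (Fin r) (Fin n) ℝ =>
    q.1 * q.2 := continuous_fst.matrix_mul continuous_snd
  have hfst : ∀ i j, Continuous fun q : Matrix (Fin m) (Fin r) ℝ × Matrix (Fin r) (Fin n) ℝ =>
    q.1 i j := fun i j => continuous_fst.matrix_elem i j
  have hsnd : ∀ i j, Continuous fun q : Matrix (Fin m) (Fin r) ℝ × Matrix (Fin r) (Fin n) ℝ =>
    q.2 i j := fun i j => continuous_snd.matrix_elem i j
  have hent : ∀ i j, Continuous fun q : Matrix (Fin m) (Fin r) ℝ × Matrix (Fin r) (Fin n) ℝ =>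
    (q.1 * q.2 - M) i j := fun i j => (hmul.sub continuous_const).matrix_elem i j
  have hLc := hL.comp hmul
  unfold objF frobSq
  refine ((continuous_const.mul (Continuous.add ?_ ?_)).add (continuous_const.mul ?_)).add
    (continuous_const.mul ?_)
  · exact continuous_finsetSum _ fun i _ => continuous_finsetSum _ fun j _ => (hfst i j).pow 2
  · exact continuous_finsetSum _ fun i _ => continuous_finsetSum _ fun j _ => (hsnd i j).pow 2
  · exact continuous_finsetSum _ fun ij _ => (hent ij.1 ij.2).pow 2
  · exact ((hLc.sub continuous_const).norm).pow 2

lemma mem_Icc_of_sq_le {C x : ℝ} (hC : 0 ≤ C) (hx : x ^ 2 ≤ 2 * C) :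
    x ∈ Set.Icc (-(2 * C + 1)) (2 * C + 1) :=
  ⟨by nlinarith, by nlinarith⟩

/-- The objective attains a global minimum. -/
theorem objF_exists_global_min {m n r p : ℕ} (Ω : Finset (Fin m × Fin n)) (M : Matrix (Fin m) (Fin n) ℝ)
    (L : Matrix (Fin m) (Fin n) ℝ →ₗ[ℝ] EuclideanSpace ℝ (Fin p))
    (b : EuclideanSpace ℝ (Fin p)) (μ ν : ℝ) (hμ : 0 < μ) (hν : 0 < ν) :
    ∃ (U₀ : Matrix (Fin m) (Fin r) ℝ) (V₀ : Matrix (Fin r) (Fin n) ℝ),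
      ∀ (U : Matrix (Fin m) (Fin r) ℝ) (V : Matrix (Fin r) (Fin n) ℝ),
        objF Ω M L b μ ν U₀ V₀ ≤ objF Ω M L b μ ν U V := by
  have hlow : ∀ (U : Matrix (Fin m) (Fin r) ℝ) (V : Matrix (Fin r) (Fin n) ℝ),
      (1 / 2) * (frobSq U + frobSq V) ≤ objF Ω M L b μ ν U V := by
    intro U V
    unfold objF
    have h1 : 0 ≤ (μ / 2) * ∑ ij ∈ Ω, ((U * V - M) ij.1 ij.2) ^ 2 :=
      mul_nonneg (by positivity) (Finset.sum_nonneg fun _ _ => sq_nonneg _)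
    have h2 : 0 ≤ (ν / 2) * ‖L (U * V) - b‖ ^ 2 := by positivity
    linarith
  have hcont := continuous_objF (r := r) Ω M L b μ ν
  obtain ⟨C, hC⟩ : ∃ C : ℝ, C = objF Ω M L b μ ν (0 : Matrix (Fin m) (Fin r) ℝ)
    (0 : Matrix (Fin r) (Fin n) ℝ) := ⟨_, rfl⟩
  have hC0 : 0 ≤ C := by
    have h0 := hlow 0 0
    have h1 := frobSq_nonneg (0 : Matrix (Fin m) (Fin r) ℝ)
    have h2 := frobSq_nonneg (0 : Matrix (Fin r) (Fin n) ℝ)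
    rw [← hC] at h0
    linarith
  have hR : (0 : ℝ) ∈ Set.Icc (-(2 * C + 1)) (2 * C + 1) := ⟨by linarith, by linarith⟩
  have hKc := (isCompact_box m r (2 * C + 1)).prod (isCompact_box r n (2 * C + 1))
  have hmem : ((0 : Matrix (Fin m) (Fin r) ℝ), (0 : Matrix (Fin r) (Fin n) ℝ)) ∈
      {X : Matrix (Fin m) (Fin r) ℝ | ∀ i j, X i j ∈ Set.Icc (-(2 * C + 1)) (2 * C + 1)} ×ˢ
      {X : Matrix (Fin r) (Fin n) ℝ | ∀ i j, X i j ∈ Set.Icc (-(2 * C + 1)) (2 * C + 1)} :=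
    Set.mk_mem_prod (fun _ _ => hR) (fun _ _ => hR)
  obtain ⟨q, -, hq⟩ := hKc.exists_isMinOn ⟨_, hmem⟩ hcont.continuousOn
  rw [isMinOn_iff] at hq
  have hq0 : objF Ω M L b μ ν q.1 q.2 ≤ C := by
    rw [hC]
    exact hq (0, 0) hmem
  refine ⟨q.1, q.2, fun U V => ?_⟩
  rcases le_total C (objF Ω M L b μ ν U V) with h | h
  · exact hq0.trans h
  · have hl := hlow U V
    have hU := frobSq_nonneg U
    have hV := frobSq_nonneg V
    have hU2 : ∀ i j, U i j ∈ Set.Icc (-(2 * C + 1)) (2 * C + 1) := fun i j =>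
      mem_Icc_of_sq_le hC0 ((sq_le_frobSq U i j).trans (by linarith only [hl, hU, hV, h]))
    have hV2 : ∀ i j, V i j ∈ Set.Icc (-(2 * C + 1)) (2 * C + 1) := fun i j =>
      mem_Icc_of_sq_le hC0 ((sq_le_frobSq V i j).trans (by linarith only [hl, hU, hV, h]))
    exact hq (U, V) (Set.mk_mem_prod hU2 hV2)
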